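/- There exists θ > 0, depending only on the dimension m, such that for all 0 < s < r and every smooth vector field Y : B̄_r → ℝ^m flat at the origin with ‖Y‖_{0,r} < (r−s)·θ and ‖Y‖_{1,r} < θ, the flow of Y is defined for all times t ∈ [0,1] as a smooth map φ_Y^t : B̄_s → B_r (i.e. there is a smooth map φ : [0,1] × B̄_s → B_r with φ(0,x) = x and ∂_t φ(t,x) = Y(φ(t,x))), and moreover the time-one flow φ_Y := φ_Y^1 satisfies, for every n ∈ ℕ, ‖φ_Y − id‖_{n,s} ≤ C · ‖Y‖_{n,r} with a constant C = C(n,r) depending continuously on r. -/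

import Mathlib

open Metric Set

/-- The `C^n` norm `‖F‖_{n,r} = sup_{x ∈ B̄_r} max_{|a| ≤ n} |D^a F(x)|` of a map on
the closed ball. -/
noncomputable def cnNorm (m : ℕ) (r : ℝ) (n : ℕ)
    (F : EuclideanSpace ℝ (Fin m) → EuclideanSpace ℝ (Fin m)) : ℝ :=
  ⨆ p : (closedBall (0 : EuclideanSpace ℝ (Fin m)) r :
      Set (EuclideanSpace ℝ (Fin m))) × Fin (n + 1),
    ‖iteratedFDerivWithin ℝ p.2 F (closedBall 0 r) p.1‖

/-- A vector field flat at the origin. -/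
def FlatVF (m : ℕ) (r : ℝ)
    (V : EuclideanSpace ℝ (Fin m) → EuclideanSpace ℝ (Fin m)) : Prop :=
  ∀ i : ℕ, iteratedFDerivWithin ℝ i V (closedBall 0 r) 0 = 0

/-! The integral curve of `Y` issued from `x` is a fixed point of `γ ↦ x + ∫₀ᵗ Y (γ u) du` on the
Banach space of paths `[0, 1] → E`. The bounds on `Y` and `DY` make this map a contraction of a ball
of paths, so the curve exists, and it depends smoothly on `x` by the implicit function theorem.
Smoothness in time comes with it, because the curve of `t • Y` at time one is the curve of `Y` at
time `t`.

The displacement `d x = ∫ Y (G x)` of the solution `G = id + d` is estimated by induction on the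
order of differentiation. In the chain rule for `d`, the term containing the top order derivative of
`G` has the factor `DY(G)`, of norm at most `1 / 2`, and is absorbed. The remaining terms are
products of derivatives of `Y` and of lower order derivatives of `G`, and to bound them linearly in
the `C^n` norm of `Y` one interpolates: the Landau–Kolmogorov inequality makes the sequence
`‖Y‖_{j + 1}` approximately log-convex, hence bounded, for `j ≤ N`, by a constant multiple of
`‖Y‖₁ A ^ j` with `‖Y‖₁ A ^ N = ‖Y‖_{N + 1}`. The power of `A` in each product
is then at most `N`. -/

open scoped ContDiff NNReal

universe u

section Paths

variable {K : Type*} [TopologicalSpace K] [CompactSpace K]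
  {E G : Type u} [NormedAddCommGroup E] [NormedSpace ℝ E] [NormedAddCommGroup G] [NormedSpace ℝ G]

variable (K E G) in
/-- Pointwise evaluation of a family of operators on a family of vectors,
`(A, h) ↦ (t ↦ A t (h t))`, as a bounded bilinear map; it expresses the derivative of
postcomposition. -/
noncomputable def pointwiseApply : C(K, E →L[ℝ] G) →L[ℝ] C(K, E) →L[ℝ] C(K, G) :=
  LinearMap.mkContinuous₂
    (LinearMap.mk₂ ℝ
      (fun (A : C(K, E →L[ℝ] G)) (h : C(K, E)) => (⟨fun t => A t (h t), by fun_prop⟩ : C(K, G)))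
      (fun _ _ _ => by ext; simp) (fun _ _ _ => by ext; simp)
      (fun _ _ _ => by ext; simp) (fun _ _ _ => by ext; simp))
    1 fun A h => by
      rw [one_mul, ContinuousMap.norm_le _ (by positivity)]
      refine fun t => ((A t).le_opNorm (h t)).trans ?_
      gcongr
      exacts [A.norm_coe_le_norm t, h.norm_coe_le_norm t]

theorem hasFDerivAt_postcomp {f : C(E, G)} {f' : C(E, E →L[ℝ] G)}
    (hf : ∀ x, HasFDerivAt f (f' x) x) (γ : C(K, E)) :
    HasFDerivAt (fun γ : C(K, E) => f.comp γ) (pointwiseApply K E G (f'.comp γ)) γ := by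
  rw [hasFDerivAt_iff_isLittleO_nhds_zero, Asymptotics.isLittleO_iff]
  intro ε hε
  have hcont : Continuous fun γ : C(K, E) => f'.comp γ := f'.continuous_postcomp
  obtain ⟨δ, hδ, hclose⟩ := Metric.continuous_iff (β := C(K, E →L[ℝ] G)).1 hcont γ ε hε
  filter_upwards [ball_mem_nhds 0 hδ] with h hh
  rw [mem_ball_zero_iff] at hh
  rw [ContinuousMap.norm_le _ (by positivity)]
  intro t
  have hderiv : ∀ y ∈ segment ℝ (γ t) (γ t + h t), ‖f' y - f' (γ t)‖ ≤ ε := by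
    rw [segment_eq_image']
    rintro _ ⟨σ, hσ, rfl⟩
    have hdist : dist (γ + σ • h) γ < δ := by
      rw [dist_eq_norm, add_sub_cancel_left, norm_smul, Real.norm_of_nonneg hσ.1]
      exact (mul_le_of_le_one_left (norm_nonneg _) hσ.2).trans_lt hh
    simpa [dist_eq_norm] using
      ((ContinuousMap.dist_apply_le_dist t).trans_lt (hclose _ hdist)).le
  have hmv := (convex_segment (γ t) (γ t + h t)).norm_image_sub_le_of_norm_hasFDerivWithin_le'
    (fun y _ => (hf y).hasFDerivWithinAt) hderiv (left_mem_segment ..) (right_mem_segment ..)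
  rw [add_sub_cancel_left] at hmv
  exact hmv.trans (by gcongr; exact h.norm_coe_le_norm t)

theorem contDiff_postcomp {n : ℕ∞} {f : C(E, G)} (hf : ContDiff ℝ n f) :
    ContDiff ℝ n fun γ : C(K, E) => f.comp γ := by
  suffices ∀ n : ℕ, ∀ {G : Type u} [NormedAddCommGroup G] [NormedSpace ℝ G] {f : C(E, G)},
      ContDiff ℝ n f → ContDiff ℝ n fun γ : C(K, E) => f.comp γ from
    contDiff_iff_forall_nat_le.2 fun m hm => this m (hf.of_le (by exact_mod_cast hm))
  intro n
  induction n with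
  | zero => exact fun _ => contDiff_zero.2 (ContinuousMap.continuous_postcomp _)
  | succ n ih =>
    intro G _ _ f hf
    obtain ⟨f', hf', hderiv⟩ := contDiff_succ_iff_hasFDerivAt.1 (mod_cast hf)
    exact_mod_cast contDiff_succ_iff_hasFDerivAt.2
      ⟨_, (pointwiseApply K E G).contDiff.comp (ih (f := ⟨f', hf'.continuous⟩) hf'),
        hasFDerivAt_postcomp hderiv⟩

theorem iteratedFDeriv_postcomp_apply {j : ℕ} {f : C(E, G)} (hf : ContDiff ℝ j f)
    (γ : C(K, E)) (v : Fin j → C(K, E)) (t : K) :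
    iteratedFDeriv ℝ j (fun γ : C(K, E) => f.comp γ) γ v t =
      iteratedFDeriv ℝ j f (γ t) fun i => v i t := by
  have hcomm : (ContinuousMap.evalCLM ℝ t : C(K, G) →L[ℝ] G) ∘ (fun γ : C(K, E) => f.comp γ) =
      f ∘ (ContinuousMap.evalCLM ℝ t : C(K, E) →L[ℝ] E) := rfl
  have hleft := (ContinuousMap.evalCLM ℝ t : C(K, G) →L[ℝ] G).iteratedFDeriv_comp_left
    (contDiff_postcomp (K := K) (n := j) hf).contDiffAt (x := γ) le_rfl
  have hright := (ContinuousMap.evalCLM ℝ t : C(K, E) →L[ℝ] E).iteratedFDeriv_comp_right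
    hf γ le_rfl
  rw [hcomm, hright] at hleft
  exact (congrArg (fun D => D v) hleft).symm

theorem norm_iteratedFDeriv_postcomp_le {j : ℕ} {f : C(E, G)} (hf : ContDiff ℝ j f)
    {γ : C(K, E)} {C : ℝ} (hC : 0 ≤ C) (h : ∀ t, ‖iteratedFDeriv ℝ j f (γ t)‖ ≤ C) :
    ‖iteratedFDeriv ℝ j (fun γ : C(K, E) => f.comp γ) γ‖ ≤ C := by
  refine ContinuousMultilinearMap.opNorm_le_bound hC fun v => ?_
  rw [ContinuousMap.norm_le _ (by positivity)]
  intro t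
  rw [iteratedFDeriv_postcomp_apply hf]
  refine ((iteratedFDeriv ℝ j f (γ t)).le_opNorm _).trans ?_
  gcongr with i
  exacts [h t, (v i).norm_coe_le_norm t]

end Paths

section Picard

variable {E : Type u} [NormedAddCommGroup E] [NormedSpace ℝ E]

variable (E) in
/-- The Volterra operator `w ↦ (t ↦ ∫₀ᵗ w)` on paths. The integrand is extended from the unit
interval to the line by the projection `projIcc`. -/
noncomputable def pathPrimitive : C(unitInterval, E) →L[ℝ] C(unitInterval, E) :=
  have hint (w : C(unitInterval, E)) (a b : ℝ) :
      IntervalIntegrable (fun u => w (projIcc 0 1 zero_le_one u)) MeasureTheory.volume a b :=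
    (w.continuous.comp continuous_projIcc).intervalIntegrable a b
  LinearMap.mkContinuous
    { toFun w := ⟨fun t => ∫ u in (0 : ℝ)..t, w (projIcc 0 1 zero_le_one u),
        (intervalIntegral.continuous_primitive (hint w) 0).comp continuous_subtype_val⟩
      map_add' v w := ContinuousMap.ext fun _ =>
        intervalIntegral.integral_add (hint v _ _) (hint w _ _)
      map_smul' a w := ContinuousMap.ext fun _ => intervalIntegral.integral_smul a _ }
    1 fun w => by
      rw [one_mul, ContinuousMap.norm_le _ (norm_nonneg _)]
      intro t
      have hbound := intervalIntegral.norm_integral_le_of_norm_le_const (a := 0) (b := (t : ℝ))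
        (f := fun u => w (projIcc 0 1 zero_le_one u)) fun u _ => w.norm_coe_le_norm _
      rw [sub_zero, abs_of_nonneg t.2.1] at hbound
      exact hbound.trans (mul_le_of_le_one_right (norm_nonneg _) t.2.2)

theorem norm_pathPrimitive_le : ‖pathPrimitive E‖ ≤ 1 := by
  rw [pathPrimitive]
  exact LinearMap.mkContinuous_norm_le _ zero_le_one _

/-- The Picard operator `γ ↦ (t ↦ ∫₀ᵗ Z (γ u) du)` of a vector field `Z`: the integral curves of
`τ • Z` issued from `x` are the solutions of `γ = x + τ • picardOperator Z γ`. -/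
noncomputable def picardOperator (Z : C(E, E)) (γ : C(unitInterval, E)) : C(unitInterval, E) :=
  pathPrimitive E (Z.comp γ)

theorem picardOperator_apply (Z : C(E, E)) (γ : C(unitInterval, E)) (t : unitInterval) :
    picardOperator Z γ t = ∫ u in (0 : ℝ)..t, Z (γ (projIcc 0 1 zero_le_one u)) :=
  rfl

theorem contDiff_picardOperator {n : ℕ∞} {Z : C(E, E)} (hZ : ContDiff ℝ n Z) :
    ContDiff ℝ n (picardOperator Z) :=
  (pathPrimitive E).contDiff.comp (contDiff_postcomp hZ)

theorem norm_iteratedFDeriv_picardOperator_le {j : ℕ} {Z : C(E, E)} (hZ : ContDiff ℝ j Z)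
    {γ : C(unitInterval, E)} {C : ℝ} (h : ∀ t, ‖iteratedFDeriv ℝ j Z (γ t)‖ ≤ C) :
    ‖iteratedFDeriv ℝ j (picardOperator Z) γ‖ ≤ C := by
  have hC : 0 ≤ C := (norm_nonneg _).trans (h 0)
  have hcomp : ContDiff ℝ j fun γ : C(unitInterval, E) => Z.comp γ :=
    contDiff_postcomp (n := j) hZ
  calc ‖iteratedFDeriv ℝ j (picardOperator Z) γ‖
      ≤ ‖pathPrimitive E‖ * ‖iteratedFDeriv ℝ j (fun γ => Z.comp γ) γ‖ :=
        (pathPrimitive E).norm_iteratedFDeriv_comp_left hcomp.contDiffAt le_rfl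
    _ ≤ 1 * C := by
        gcongr
        exacts [norm_pathPrimitive_le, norm_iteratedFDeriv_postcomp_le hZ hC h]
    _ = C := one_mul C

theorem picardOperator_comp_mul (Z : C(E, E)) (γ : C(unitInterval, E)) (τ t : unitInterval) :
    picardOperator Z γ (τ * t) =
      (τ : ℝ) • picardOperator Z (γ.comp (.mulLeft τ)) t := by
  rw [picardOperator_apply, picardOperator_apply]
  have hsubst := intervalIntegral.smul_integral_comp_mul_left (a := 0) (b := (t : ℝ))
    (fun u => Z (γ (projIcc 0 1 zero_le_one u))) (τ : ℝ)
  rw [mul_zero] at hsubst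
  rw [Set.Icc.coe_mul, ← hsubst]
  congr 1
  refine intervalIntegral.integral_congr fun u hu => ?_
  rw [uIcc_of_le t.2.1] at hu
  have hu₁ : u ∈ Icc (0 : ℝ) 1 := ⟨hu.1, hu.2.trans t.2.2⟩
  have hu₂ : (τ : ℝ) * u ∈ Icc (0 : ℝ) 1 := unitInterval.mul_mem τ.2 hu₁
  simp only [projIcc_of_mem _ hu₁, projIcc_of_mem _ hu₂]
  rfl

theorem apply_zero_of_eq_const_add_picardOperator {Z : C(E, E)} {γ : C(unitInterval, E)} {x : E}
    (hγ : γ = .const _ x + picardOperator Z γ) : γ 0 = x := by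
  rw [hγ]
  simp [picardOperator_apply]

theorem hasDerivWithinAt_of_eq_const_add_picardOperator [CompleteSpace E] {Z : C(E, E)}
    {γ : C(unitInterval, E)} {x : E} (hγ : γ = .const _ x + picardOperator Z γ) {ψ : ℝ → E}
    (hψ : ∀ t : unitInterval, ψ t = γ t) {t : ℝ} (ht : t ∈ Icc (0 : ℝ) 1) :
    HasDerivWithinAt ψ (Z (ψ t)) (Icc 0 1) t := by
  have hval : ∀ t ∈ Icc (0 : ℝ) 1, ψ t =
      x + ∫ u in (0 : ℝ)..t, Z (γ (projIcc 0 1 zero_le_one u)) := fun t ht => by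
    rw [hψ ⟨t, ht⟩]
    exact congrArg (fun γ => γ ⟨t, ht⟩) hγ
  have hcont : Continuous fun u : ℝ => Z (γ (projIcc 0 1 zero_le_one u)) :=
    Z.continuous.comp (γ.continuous.comp continuous_projIcc)
  have hftc := (hcont.integral_hasStrictDerivAt 0 t).hasDerivAt.const_add x
  rw [projIcc_of_mem _ ht, ← hψ ⟨t, ht⟩] at hftc
  exact hftc.hasDerivWithinAt.congr hval (hval t ht)

end Picard

section UniformContraction

theorem eq_of_isFixedPt_of_lipschitzOnWith {X : Type*} [MetricSpace X] {f : X → X} {C : Set X}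
    {K : ℝ≥0} (hK : K < 1) (hf : LipschitzOnWith K f C) {x y : X} (hx : x ∈ C) (hy : y ∈ C)
    (hfx : Function.IsFixedPt f x) (hfy : Function.IsFixedPt f y) : x = y := by
  have hdist := hf.dist_le_mul x hx y hy
  rw [hfx, hfy] at hdist
  have : (K : ℝ) < 1 := mod_cast hK
  exact dist_le_zero.1 (by nlinarith [dist_nonneg (x := x) (y := y)])

theorem exists_isFixedPt_of_lipschitzOnWith {X : Type*} [MetricSpace X] [CompleteSpace X]
    {f : X → X} {C : Set X} {K : ℝ≥0} (hK : K < 1) (hC : IsClosed C) (hne : C.Nonempty)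
    (hmaps : MapsTo f C C) (hf : LipschitzOnWith K f C) : ∃ x ∈ C, Function.IsFixedPt f x := by
  obtain ⟨x₀, hx₀⟩ := hne
  obtain ⟨x, hx, hfix, -⟩ := ContractingWith.exists_fixedPoint' hC.isComplete hmaps
    ⟨hK, hf.mapsToRestrict hmaps⟩ hx₀ (edist_ne_top _ _)
  exact ⟨x, hx, hfix⟩

variable {𝕜 : Type*} [RCLike 𝕜] {P : Type*} [NormedAddCommGroup P] [NormedSpace 𝕜 P]
  [CompleteSpace P] {X : Type*} [NormedAddCommGroup X] [NormedSpace 𝕜 X] [CompleteSpace X]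
  {n : ℕ∞ω} {F : P → X → X}

theorem exists_contDiffAt_isFixedPt_of_norm_fderiv_lt_one (hn : n ≠ 0) {p₀ : P} {x₀ : X}
    (hF : ContDiffAt 𝕜 n F.uncurry (p₀, x₀)) (hx₀ : Function.IsFixedPt (F p₀) x₀)
    (hlt : ‖fderiv 𝕜 (F p₀) x₀‖ < 1) :
    ∃ g : P → X, ContDiffAt 𝕜 n g p₀ ∧ g p₀ = x₀ ∧
      ∀ᶠ p in nhds p₀, Function.IsFixedPt (F p) (g p) := by
  let H : P × X → X := fun q => q.2 - F.uncurry q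
  have hH : ContDiffAt 𝕜 n H (p₀, x₀) := contDiffAt_snd.sub hF
  have hpartial : fderiv 𝕜 H (p₀, x₀) ∘L .inr 𝕜 P X = 1 - fderiv 𝕜 (F p₀) x₀ := by
    have hinr : HasFDerivAt (Prod.mk p₀) (.inr 𝕜 P X) x₀ := hasFDerivAt_prodMk_right p₀ x₀
    have hFx : DifferentiableAt 𝕜 (F p₀) x₀ :=
      (hF.differentiableAt hn).comp x₀ hinr.differentiableAt
    exact ((hH.differentiableAt hn).hasFDerivAt.comp x₀ hinr).unique
      ((hasFDerivAt_id x₀).sub hFx.hasFDerivAt)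
  have hinv : (fderiv 𝕜 H (p₀, x₀) ∘L .inr 𝕜 P X).IsInvertible := by
    obtain ⟨w, hw⟩ := isUnit_one_sub_of_norm_lt_one hlt
    exact ⟨.ofUnit w, by rw [hpartial, ← hw]; rfl⟩
  refine ⟨hH.implicitFunction hn hinv, hH.contDiffAt_implicitFunction hn hinv,
    hH.implicitFunction_apply_self hn hinv, ?_⟩
  filter_upwards [hH.eventually_apply_implicitFunction hn hinv] with p hp
  have hzero : H (p₀, x₀) = 0 := sub_eq_zero.2 hx₀.symm
  exact (sub_eq_zero.1 (hp.trans hzero)).symm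

/-- The implicit function theorem applied to `x - F p x = 0` produces a smooth local branch of
fixed points, which coincides with `Γ` because fixed points in `C` are unique. -/
theorem contDiffOn_of_isFixedPt (hn : n ≠ 0) {U : Set P} {C : Set X} {K : ℝ≥0} (hK : K < 1)
    (hlip : ∀ p ∈ U, LipschitzOnWith K (F p) C)
    (hF : ∀ p ∈ U, ∀ x ∈ interior C, ContDiffAt 𝕜 n F.uncurry (p, x)) {Γ : P → X}
    (hΓ : ∀ p ∈ U, Γ p ∈ interior C ∧ Function.IsFixedPt (F p) (Γ p)) : ContDiffOn 𝕜 n Γ U := by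
  intro p₀ hp₀
  have hC : C ∈ nhds (Γ p₀) := mem_interior_iff_mem_nhds.1 (hΓ p₀ hp₀).1
  have hlt : ‖fderiv 𝕜 (F p₀) (Γ p₀)‖ < 1 :=
    (norm_fderiv_le_of_lipschitzOn 𝕜 hC (hlip p₀ hp₀)).trans_lt (mod_cast hK)
  obtain ⟨g, hg, hgp₀, hgfix⟩ := exists_contDiffAt_isFixedPt_of_norm_fderiv_lt_one hn
    (hF p₀ hp₀ _ (hΓ p₀ hp₀).1) (hΓ p₀ hp₀).2 hlt
  have hgC : ∀ᶠ p in nhds p₀, g p ∈ C := hg.continuousAt.eventually_mem (hgp₀ ▸ hC)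
  refine hg.contDiffWithinAt.congr_of_eventuallyEq_of_mem ?_ hp₀
  filter_upwards [nhdsWithin_le_nhds hgC, nhdsWithin_le_nhds hgfix, self_mem_nhdsWithin]
    with p hpC hpfix hpU
  exact eq_of_isFixedPt_of_lipschitzOnWith hK (hlip p hpU) (interior_subset (hΓ p hpU).1) hpC
    (hΓ p hpU).2 hpfix

theorem exists_contDiffOn_isFixedPt (hn : n ≠ 0) {U : Set P} {C : Set X} {K : ℝ≥0} (hK : K < 1)
    (hC : IsClosed C) (hne : C.Nonempty) (hmaps : ∀ p ∈ U, MapsTo (F p) C (interior C))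
    (hlip : ∀ p ∈ U, LipschitzOnWith K (F p) C)
    (hF : ∀ p ∈ U, ∀ x ∈ interior C, ContDiffAt 𝕜 n F.uncurry (p, x)) :
    ∃ Γ : P → X, ContDiffOn 𝕜 n Γ U ∧
      ∀ p ∈ U, Γ p ∈ interior C ∧ Function.IsFixedPt (F p) (Γ p) := by
  have hex : ∀ p ∈ U, ∃ x, x ∈ interior C ∧ Function.IsFixedPt (F p) x := fun p hp => by
    obtain ⟨x, hx, hfix⟩ := exists_isFixedPt_of_lipschitzOnWith hK hC hne
      ((hmaps p hp).mono_right interior_subset) (hlip p hp)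
    exact ⟨x, hfix ▸ hmaps p hp hx, hfix⟩
  choose! Γ hΓ using hex
  exact ⟨Γ, contDiffOn_of_isFixedPt hn hK hlip hF hΓ, hΓ⟩

end UniformContraction

section Composition

open scoped Nat

variable {E F G : Type*} [NormedAddCommGroup E] [NormedSpace ℝ E] [NormedAddCommGroup F]
  [NormedSpace ℝ F] [NormedAddCommGroup G] [NormedSpace ℝ G]
  {g : F → G} {f : E → F} {s : Set E} {x : E}

/-- The usual bound `norm_iteratedFDerivWithin_comp_le`, applied after rescaling the intermediate
space by `A`. -/
theorem norm_iteratedFDerivWithin_comp_le_of_geometric {n : ℕ} (hg : ContDiff ℝ n g)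
    (hf : ContDiffOn ℝ n f s) (hs : UniqueDiffOn ℝ s) (hx : x ∈ s) {A B D : ℝ} (hA : 0 < A)
    (hgB : ∀ j ≤ n, ‖iteratedFDeriv ℝ j g (f x)‖ ≤ B * A ^ j)
    (hfD : ∀ j, 1 ≤ j → j ≤ n → A * ‖iteratedFDerivWithin ℝ j f s x‖ ≤ (D * A) ^ j) :
    ‖iteratedFDerivWithin ℝ n (g ∘ f) s x‖ ≤ n ! * B * (D * A) ^ n := by
  have hcomp : g ∘ f = (fun z => g (A⁻¹ • z)) ∘ (A • f) := by
    ext y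
    simp [smul_smul, inv_mul_cancel₀ hA.ne']
  have hg' : ContDiff ℝ n fun z => g (A⁻¹ • z) := hg.comp (contDiff_const_smul _)
  have hf' : ContDiffOn ℝ n (A • f) s := hf.const_smul A
  rw [hcomp]
  refine norm_iteratedFDerivWithin_comp_le hg'.contDiffOn hf' le_rfl uniqueDiffOn_univ hs
    (mapsTo_univ _ _) hx ?_ ?_
  · intro j hj
    rw [iteratedFDerivWithin_univ, iteratedFDeriv_comp_const_smul _
      (hg.of_le (by exact_mod_cast hj)), norm_smul, norm_pow, norm_inv,
      Real.norm_of_nonneg hA.le, inv_pow, inv_mul_le_iff₀ (by positivity), mul_comm]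
    simpa only [Pi.smul_apply, smul_smul, inv_mul_cancel₀ hA.ne', one_smul] using hgB j hj
  · intro j hj₁ hj
    rw [iteratedFDerivWithin_const_smul_apply ((hf x hx).of_le (by exact_mod_cast hj)) hs hx,
      norm_smul, Real.norm_of_nonneg hA.le]
    exact hfD j hj₁ hj

/-- The numerical factor of the terms containing a derivative of `Dg ∘ f` when the Leibniz rule
is applied to `D(g ∘ f) = (Dg ∘ f) ∘ Df`; see `norm_iteratedFDerivWithin_succ_comp_le`. -/
def leibnizConst (i : ℕ) : ℝ := ∑ k ∈ Finset.range i, (i.choose (k + 1) * (k + 1)! : ℝ)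

theorem leibnizConst_nonneg (i : ℕ) : 0 ≤ leibnizConst i := by
  unfold leibnizConst
  positivity

theorem norm_iteratedFDerivWithin_fderiv_comp_le {i : ℕ} (hg : ContDiff ℝ (i + 1) g)
    (hf : ContDiffOn ℝ i f s) (hs : UniqueDiffOn ℝ s) (hx : x ∈ s) {A B D : ℝ} (hA : 0 < A)
    (hgB : ∀ j ≤ i, ‖iteratedFDeriv ℝ (j + 1) g (f x)‖ ≤ B * A ^ j)
    (hfD : ∀ j < i, ‖iteratedFDerivWithin ℝ (j + 1) f s x‖ ≤ D ^ (j + 1) * A ^ j) :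
    ‖iteratedFDerivWithin ℝ i (fderiv ℝ g ∘ f) s x‖ ≤ i ! * B * (D * A) ^ i := by
  refine norm_iteratedFDerivWithin_comp_le_of_geometric (hg.fderiv_right le_rfl) hf hs hx hA
    (fun j hj => norm_iteratedFDeriv_fderiv.trans_le (hgB j hj)) fun j hj₁ hj => ?_
  obtain ⟨j, rfl⟩ := Nat.exists_eq_add_of_le' hj₁
  calc A * ‖iteratedFDerivWithin ℝ (j + 1) f s x‖ ≤ A * (D ^ (j + 1) * A ^ j) := by
        gcongr
        exact hfD j hj
    _ = (D * A) ^ (j + 1) := by ring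

theorem norm_iteratedFDerivWithin_succ_comp_le_sum {i : ℕ} (hg : ContDiff ℝ (i + 1) g)
    (hf : ContDiffOn ℝ (i + 1) f s) (hs : UniqueDiffOn ℝ s) (hx : x ∈ s) :
    ‖iteratedFDerivWithin ℝ (i + 1) (g ∘ f) s x‖ ≤
      ∑ k ∈ Finset.range (i + 1), i.choose k * ‖iteratedFDerivWithin ℝ k (fderiv ℝ g ∘ f) s x‖ *
        ‖iteratedFDerivWithin ℝ (i - k + 1) f s x‖ := by
  have hchain : EqOn (fderivWithin ℝ (g ∘ f) s)
      (fun y => ContinuousLinearMap.compL ℝ E F G ((fderiv ℝ g ∘ f) y) (fderivWithin ℝ f s y)) s :=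
    fun y hy => fderiv_comp_fderivWithin y (hg.differentiable (by simp) _)
      (hf.differentiableOn (by simp) y hy) (hs y hy)
  rw [← norm_iteratedFDerivWithin_fderivWithin hs hx, iteratedFDerivWithin_congr hchain hx]
  simp only [← norm_iteratedFDerivWithin_fderivWithin hs hx]
  exact ContinuousLinearMap.norm_iteratedFDerivWithin_le_of_bilinear_of_le_one _
    ((hg.fderiv_right le_rfl).comp_contDiffOn (hf.of_le le_self_add))
    (hf.fderivWithin hs le_rfl) hs hx le_rfl (ContinuousLinearMap.norm_compL_le ℝ E F G)

theorem norm_iteratedFDerivWithin_succ_comp_le {i : ℕ} (hg : ContDiff ℝ (i + 1) g)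
    (hf : ContDiffOn ℝ (i + 1) f s) (hs : UniqueDiffOn ℝ s) (hx : x ∈ s) {A B D : ℝ} (hA : 0 < A)
    (hB : 0 ≤ B) (hD : 0 ≤ D)
    (hgB : ∀ j ≤ i, ‖iteratedFDeriv ℝ (j + 1) g (f x)‖ ≤ B * A ^ j)
    (hfD : ∀ j < i, ‖iteratedFDerivWithin ℝ (j + 1) f s x‖ ≤ D ^ (j + 1) * A ^ j) :
    ‖iteratedFDerivWithin ℝ (i + 1) (g ∘ f) s x‖ ≤
      ‖fderiv ℝ g (f x)‖ * ‖iteratedFDerivWithin ℝ (i + 1) f s x‖ +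
        leibnizConst i * B * D ^ (i + 1) * A ^ i := by
  refine (norm_iteratedFDerivWithin_succ_comp_le_sum hg hf hs hx).trans ?_
  rw [Finset.sum_range_succ', add_comm]
  simp only [Nat.choose_zero_right, Nat.cast_one, one_mul, Nat.sub_zero,
    norm_iteratedFDerivWithin_zero, Function.comp_apply]
  gcongr
  simp only [leibnizConst, Finset.sum_mul]
  refine Finset.sum_le_sum fun k hk => ?_
  obtain ⟨l, rfl⟩ : ∃ l, i = l + (k + 1) := Nat.exists_eq_add_of_le' (Finset.mem_range.1 hk)
  have hk_le : ((k + 1 : ℕ) : ℕ∞ω) ≤ (l + (k + 1) : ℕ) := by exact_mod_cast Nat.le_add_left _ _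
  have hgk := norm_iteratedFDerivWithin_fderiv_comp_le (i := k + 1)
    (hg.of_le (by gcongr)) (hf.of_le (hk_le.trans le_self_add)) hs hx hA
    (fun j hj => hgB j (by omega)) (fun j hj => hfD j (by omega))
  have hfl := hfD l (by omega)
  rw [Nat.add_sub_cancel]
  calc _ ≤ (l + (k + 1)).choose (k + 1) * ((k + 1)! * B * (D * A) ^ (k + 1)) *
        (D ^ (l + 1) * A ^ l) := by gcongr
    _ = _ := by ring

end Composition

section FixedPointEstimate

/-- The constants in the estimate `norm_iteratedFDerivWithin_comp_le_of_eq_add` for the derivatives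
of a solution of `G = c + T ∘ G`; `K` measures how far the derivatives of `T` are from growing
geometrically. -/
def fixedPointConst (K : ℝ) : ℕ → ℝ
  | 0 => 2
  | i + 1 => fixedPointConst K i +
      2 * (leibnizConst (i + 1) * K * fixedPointConst K i ^ (i + 2))

theorem two_le_fixedPointConst {K : ℝ} (hK : 0 ≤ K) (i : ℕ) : 2 ≤ fixedPointConst K i := by
  induction i with
  | zero => exact le_rfl
  | succ i ih =>
    have := leibnizConst_nonneg (i + 1)
    have : 0 ≤ fixedPointConst K i := two_pos.le.trans ih
    exact ih.trans (le_add_of_nonneg_right (by positivity))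

theorem fixedPointConst_nonneg {K : ℝ} (hK : 0 ≤ K) (i : ℕ) : 0 ≤ fixedPointConst K i :=
  two_pos.le.trans (two_le_fixedPointConst hK i)

theorem monotone_fixedPointConst {K : ℝ} (hK : 0 ≤ K) : Monotone (fixedPointConst K) := by
  refine monotone_nat_of_le_succ fun i => ?_
  have := leibnizConst_nonneg (i + 1)
  have := fixedPointConst_nonneg hK i
  exact le_add_of_nonneg_right (by positivity)

theorem continuous_fixedPointConst (i : ℕ) : Continuous fun K => fixedPointConst K i := by
  induction i with
  | zero => exact continuous_const
  | succ i ih =>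
    simp only [fixedPointConst]
    fun_prop

theorem le_fixedPointConst_of_le_mul_add {n : ℕ} {K M A e : ℝ} (hK : 0 ≤ K) (hM₀ : 0 ≤ M)
    (hM : M ≤ 1 / 2) (hA : 1 ≤ A)
    (he : e ≤ M * e +
      leibnizConst (n + 1) * (K * M) * fixedPointConst K n ^ (n + 2) * A ^ (n + 1)) :
    e ≤ fixedPointConst K (n + 1) * M * A ^ (n + 1) ∧
      e ≤ fixedPointConst K (n + 1) ^ (n + 2) * A ^ (n + 1) := by
  have := leibnizConst_nonneg (n + 1)
  have := fixedPointConst_nonneg hK n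
  have hC : 1 ≤ fixedPointConst K (n + 1) := one_le_two.trans (two_le_fixedPointConst hK _)
  have hR : 0 ≤ leibnizConst (n + 1) * (K * M) * fixedPointConst K n ^ (n + 2) * A ^ (n + 1) := by
    positivity
  have he₁ : e ≤ fixedPointConst K (n + 1) * M * A ^ (n + 1) :=
    calc e
        ≤ 2 * (leibnizConst (n + 1) * (K * M) * fixedPointConst K n ^ (n + 2) * A ^ (n + 1)) := by
          nlinarith
      _ = 2 * (leibnizConst (n + 1) * K * fixedPointConst K n ^ (n + 2)) * M * A ^ (n + 1) := by
          ring
      _ ≤ fixedPointConst K (n + 1) * M * A ^ (n + 1) := by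
          gcongr
          exact le_add_of_nonneg_left this
  refine ⟨he₁, he₁.trans ?_⟩
  calc fixedPointConst K (n + 1) * M * A ^ (n + 1)
      ≤ fixedPointConst K (n + 1) * 1 * A ^ (n + 1) := by
        gcongr
        linarith
    _ ≤ fixedPointConst K (n + 1) ^ (n + 2) * A ^ (n + 1) := by
        rw [mul_one]
        gcongr
        exact le_self_pow₀ hC (by omega)

variable {E X : Type*} [NormedAddCommGroup E] [NormedSpace ℝ E] [NormedAddCommGroup X]
  [NormedSpace ℝ X] {s : Set E} {x : E} {c : E →L[ℝ] X} {G V : E → X} {T : X → X}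

theorem norm_iteratedFDerivWithin_one_clm_add_le (hV : ContDiffOn ℝ 1 V s)
    (hs : UniqueDiffOn ℝ s) (hx : x ∈ s) :
    ‖iteratedFDerivWithin ℝ 1 (⇑c + V) s x‖ ≤ ‖c‖ + ‖iteratedFDerivWithin ℝ 1 V s x‖ := by
  rw [norm_iteratedFDerivWithin_one _ (hs x hx), norm_iteratedFDerivWithin_one _ (hs x hx),
    fderivWithin_add (hs x hx) c.differentiableWithinAt (hV.differentiableOn one_ne_zero x hx),
    c.fderivWithin (hs x hx)]
  exact norm_add_le _ _

theorem iteratedFDerivWithin_add_two_clm_add {i : ℕ} (hV : ContDiffOn ℝ (i + 2 : ℕ) V s)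
    (hs : UniqueDiffOn ℝ s) (hx : x ∈ s) :
    iteratedFDerivWithin ℝ (i + 2) (⇑c + V) s x = iteratedFDerivWithin ℝ (i + 2) V s x := by
  have hderiv : EqOn (fderivWithin ℝ c s) (fun _ => c) s := fun y hy => c.fderivWithin (hs y hy)
  have hzero : iteratedFDerivWithin ℝ (i + 2) c s x = 0 := by
    rw [← norm_eq_zero, ← norm_iteratedFDerivWithin_fderivWithin hs hx,
      iteratedFDerivWithin_congr hderiv hx, iteratedFDerivWithin_succ_const, Pi.zero_apply,
      norm_zero]
  rw [iteratedFDerivWithin_add_apply c.contDiff.contDiffWithinAt (hV x hx) hs hx, hzero, zero_add]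

/-- The bounds on `T ∘ G` and on `G` are proved together by induction on the order: since
`‖DT(G)‖ ≤ 1 / 2`, the top-order term on the right-hand side is absorbed by the left-hand side, and
what remains involves only lower derivatives of `G`. -/
theorem norm_iteratedFDerivWithin_comp_le_of_eq_add {n : ℕ} (hT : ContDiff ℝ (n + 1) T)
    (hG : ContDiffOn ℝ (n + 1) G s) (hs : UniqueDiffOn ℝ s) (hx : x ∈ s) (hc : ‖c‖ ≤ 1)
    (hfix : EqOn G (⇑c + T ∘ G) s) {K M A : ℝ} (hK : 0 ≤ K) (hM : M ≤ 1 / 2) (hA : 1 ≤ A)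
    (hT₁ : ‖fderiv ℝ T (G x)‖ ≤ M)
    (hTn : ∀ j ≤ n, ‖iteratedFDeriv ℝ (j + 1) T (G x)‖ ≤ K * M * A ^ j) :
    ‖iteratedFDerivWithin ℝ (n + 1) (T ∘ G) s x‖ ≤ fixedPointConst K n * M * A ^ n ∧
      ‖iteratedFDerivWithin ℝ (n + 1) G s x‖ ≤ fixedPointConst K n ^ (n + 1) * A ^ n := by
  have hM₀ : 0 ≤ M := (norm_nonneg _).trans hT₁
  have hTG : ContDiffOn ℝ (n + 1) (T ∘ G) s := hT.comp_contDiffOn hG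
  induction n using Nat.strong_induction_on with
  | _ n ih =>
  have hrec : ∀ D, 0 ≤ D →
      (∀ j < n, ‖iteratedFDerivWithin ℝ (j + 1) G s x‖ ≤ D ^ (j + 1) * A ^ j) →
      ‖iteratedFDerivWithin ℝ (n + 1) (T ∘ G) s x‖ ≤
        M * ‖iteratedFDerivWithin ℝ (n + 1) G s x‖ +
          leibnizConst n * (K * M) * D ^ (n + 1) * A ^ n := fun D hD hGD =>
    (norm_iteratedFDerivWithin_succ_comp_le hT hG hs hx (by positivity) (by positivity) hD hTn
      hGD).trans (by gcongr)
  obtain _ | n := n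
  · have hd : ‖iteratedFDerivWithin ℝ 1 G s x‖ ≤ ‖c‖ + ‖iteratedFDerivWithin ℝ 1 (T ∘ G) s x‖ := by
      rw [iteratedFDerivWithin_congr hfix hx]
      exact norm_iteratedFDerivWithin_one_clm_add_le (hTG.of_le (by simp)) hs hx
    have he := hrec 0 le_rfl (by simp)
    simp only [leibnizConst, fixedPointConst, Finset.range_zero, Finset.sum_empty, zero_mul,
      add_zero, zero_add, pow_zero, pow_one, mul_one] at he ⊢
    constructor <;> nlinarith
  · have hd : ‖iteratedFDerivWithin ℝ (n + 2) G s x‖ =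
        ‖iteratedFDerivWithin ℝ (n + 2) (T ∘ G) s x‖ := by
      rw [iteratedFDerivWithin_congr hfix hx, iteratedFDerivWithin_add_two_clm_add
        (by exact_mod_cast hTG) hs hx]
    have hlower : ∀ j < n + 1, ‖iteratedFDerivWithin ℝ (j + 1) G s x‖ ≤
        fixedPointConst K n ^ (j + 1) * A ^ j := fun j hj => by
      have hjn : (j + 1 : ℕ∞ω) ≤ (n + 1 : ℕ) + 1 := by exact_mod_cast Nat.succ_le_succ hj.le
      have hmono := monotone_fixedPointConst hK (Nat.le_of_lt_succ hj)
      refine (ih j hj (hT.of_le hjn) (hG.of_le hjn) (fun i hi => hTn i (hi.trans hj.le))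
        (hTG.of_le hjn)).2.trans ?_
      gcongr
      exact fixedPointConst_nonneg hK j
    have he := hrec _ (fixedPointConst_nonneg hK n) hlower
    rw [hd] at he ⊢
    exact le_fixedPointConst_of_le_mul_add hK hM₀ hM hA he

end FixedPointEstimate

section LogConvexity

theorem nonpos_of_two_mul_succ_le {v : ℕ → ℝ} (hv : ∀ k, 2 * v (k + 1) ≤ v k + v (k + 2))
    (h₀ : v 0 ≤ 0) {N : ℕ} (hN : v N ≤ 0) {j : ℕ} (hj : j ≤ N) : v j ≤ 0 := by
  have hstep : ∀ k, 0 < v k → v k ≤ v (k + 1) := by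
    intro k
    induction k with
    | zero => exact fun hpos => absurd hpos h₀.not_gt
    | succ k ih =>
      intro hpos
      have hk := hv k
      rcases le_or_gt (v k) 0 with hneg | hpos'
      · linarith
      · linarith [ih hpos']
  by_contra! hpos
  exact hN.not_gt (Nat.le_induction hpos (fun i _ hi => hi.trans_le (hstep i hi)) N hj)

/-- Adding the convex function `-l * k * (N - k)` to `w` makes it convex, hence bounded by its
chord. -/
theorem le_sq_mul_add_of_two_mul_succ_le {w : ℕ → ℝ} {l a : ℝ} (hl : 0 ≤ l)
    (hw : ∀ k, 2 * w (k + 1) ≤ 2 * l + (w k + w (k + 2))) {N : ℕ} (ha : a * N = w N - w 0)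
    {j : ℕ} (hj : j ≤ N) : w j ≤ N ^ 2 * l + w 0 + j * a := by
  have hconvex := nonpos_of_two_mul_succ_le
    (v := fun k => w k - l * (k * (N - k)) - w 0 - k * a)
    (fun k => by have := hw k; push_cast; linarith) (by simp) (by simp; linarith) hj
  have hjN : (j : ℝ) ≤ N := by exact_mod_cast hj
  have : l * (j * (N - j)) ≤ l * (N * N) := by
    gcongr
    exact sub_le_self _ j.cast_nonneg
  linarith

theorem exists_le_geometric_of_sq_le {u : ℕ → ℝ} (hu : ∀ k, 0 < u k) (hmono : Monotone u) {κ : ℝ}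
    (hκ : 1 ≤ κ) (h : ∀ k, u (k + 1) ^ 2 ≤ κ ^ 2 * (u k * u (k + 2))) (N : ℕ) :
    ∃ A : ℝ, 1 ≤ A ∧ u 0 * A ^ N = u N ∧ ∀ j ≤ N, u j ≤ κ ^ N ^ 2 * u 0 * A ^ j := by
  have hκ₀ : 0 < κ := one_pos.trans_le hκ
  have hlog : ∀ k, 2 * Real.log (u (k + 1)) ≤
      2 * Real.log κ + (Real.log (u k) + Real.log (u (k + 2))) := fun k => by
    have hk := Real.log_le_log (pow_pos (hu (k + 1)) 2) (h k)
    rw [Real.log_pow, Real.log_mul (by positivity) (mul_pos (hu _) (hu _)).ne', Real.log_pow,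
      Real.log_mul (hu _).ne' (hu _).ne'] at hk
    exact_mod_cast hk
  let a := (Real.log (u N) - Real.log (u 0)) / N
  have ha : a * N = Real.log (u N) - Real.log (u 0) := by
    rcases eq_or_ne N 0 with rfl | hN
    · simp
    · exact div_mul_cancel₀ _ (by exact_mod_cast hN)
  have ha₀ : 0 ≤ a :=
    div_nonneg (sub_nonneg.2 (Real.log_le_log (hu 0) (hmono N.zero_le))) N.cast_nonneg
  refine ⟨Real.exp a, Real.one_le_exp ha₀, ?_, fun j hj => ?_⟩
  · rw [← Real.exp_nat_mul, mul_comm (N : ℝ), ha, Real.exp_sub, Real.exp_log (hu _),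
      Real.exp_log (hu _), mul_div_cancel₀ _ (hu 0).ne']
  · have hj' := le_sq_mul_add_of_two_mul_succ_le (w := fun k => Real.log (u k))
      (Real.log_nonneg hκ) hlog ha hj
    calc u j = Real.exp (Real.log (u j)) := (Real.exp_log (hu j)).symm
      _ ≤ Real.exp ((N ^ 2 : ℕ) * Real.log κ + Real.log (u 0) + j * a) := by
        push_cast
        exact Real.exp_le_exp.2 hj'
      _ = κ ^ N ^ 2 * u 0 * Real.exp a ^ j := by
        rw [Real.exp_add, Real.exp_add, Real.exp_nat_mul, Real.exp_nat_mul, Real.exp_log hκ₀,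
          Real.exp_log (hu 0)]

end LogConvexity

section CnNorm

variable {E F : Type*} [NormedAddCommGroup E] [NormedSpace ℝ E] [NormedAddCommGroup F]
  [NormedSpace ℝ F] {S : Set E} {f : E → F} {n : ℕ}

/-- The `C^n` norm of a map on a set `S`, with derivatives taken within `S`. It has the junk value
`0` when some derivative is unbounded. -/
noncomputable def cnNormOn (S : Set E) (n : ℕ) (f : E → F) : ℝ :=
  ⨆ p : S × Fin (n + 1), ‖iteratedFDerivWithin ℝ p.2 f S p.1‖

theorem cnNormOn_nonneg : 0 ≤ cnNormOn S n f :=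
  Real.iSup_nonneg fun _ => norm_nonneg _

theorem cnNormOn_le {B : ℝ} (hB : 0 ≤ B)
    (h : ∀ i ≤ n, ∀ x ∈ S, ‖iteratedFDerivWithin ℝ i f S x‖ ≤ B) : cnNormOn S n f ≤ B :=
  Real.iSup_le (fun p => h p.2 (Nat.le_of_lt_succ p.2.2) p.1 p.1.2) hB

theorem cnNormOn_congr {g : E → F} (h : EqOn f g S) : cnNormOn S n f = cnNormOn S n g :=
  iSup_congr fun p => congrArg norm (iteratedFDerivWithin_congr h p.1.2 p.2)

theorem cnNormOn_eq_zero (hf : EqOn f 0 S) : cnNormOn S n f = 0 := by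
  rw [cnNormOn_congr hf, cnNormOn]
  simp [iteratedFDerivWithin_zero]

theorem norm_iteratedFDerivWithin_le_cnNormOn (hS : IsCompact S) (hu : UniqueDiffOn ℝ S)
    (hf : ContDiffOn ℝ n f S) {i : ℕ} (hi : i ≤ n) {x : E} (hx : x ∈ S) :
    ‖iteratedFDerivWithin ℝ i f S x‖ ≤ cnNormOn S n f := by
  have hbdd : BddAbove (range fun p : S × Fin (n + 1) => ‖iteratedFDerivWithin ℝ p.2 f S p.1‖) := by
    have hbound : ∀ j : Fin (n + 1), ∃ B, ∀ y ∈ S, ‖iteratedFDerivWithin ℝ j f S y‖ ≤ B := fun j =>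
      hS.exists_bound_of_continuousOn
        (hf.continuousOn_iteratedFDerivWithin (by exact_mod_cast Nat.le_of_lt_succ j.2) hu)
    choose B hB using hbound
    obtain ⟨b, hb⟩ := (finite_range B).bddAbove
    exact ⟨b, forall_mem_range.2 fun p => (hB p.2 p.1 p.1.2).trans (hb (mem_range_self p.2))⟩
  exact le_ciSup hbdd (⟨x, hx⟩, ⟨i, Nat.lt_succ_of_le hi⟩)

theorem cnNormOn_mono (hS : IsCompact S) (hu : UniqueDiffOn ℝ S) {k : ℕ} (hkn : k ≤ n)
    (hf : ContDiffOn ℝ n f S) : cnNormOn S k f ≤ cnNormOn S n f :=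
  cnNormOn_le cnNormOn_nonneg fun _ hi _ hx =>
    norm_iteratedFDerivWithin_le_cnNormOn hS hu hf (hi.trans hkn) hx

end CnNorm

section Interpolation

variable {E F : Type*} [NormedAddCommGroup E] [NormedSpace ℝ E] [NormedAddCommGroup F]
  [NormedSpace ℝ F] {S : Set E} {f : E → F} {x y : E} {h M₀ M₂ : ℝ}

/-- Compare `f` at the end points of a diameter of the ball of radius `h` around `y`. -/
theorem norm_fderivWithin_le_of_norm_le (hh : 0 < h) (hyS : closedBall y h ⊆ S)
    (hyx : dist y x ≤ h) (hf : DifferentiableOn ℝ f S) (hM₂ : 0 ≤ M₂)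
    (hf₀ : ∀ z ∈ S, ‖f z‖ ≤ M₀)
    (hf₂ : ∀ z ∈ S, ‖fderivWithin ℝ f S z - fderivWithin ℝ f S x‖ ≤ M₂ * ‖z - x‖) :
    ‖fderivWithin ℝ f S x‖ ≤ M₀ / h + 2 * h * M₂ := by
  have hM₀ : 0 ≤ M₀ := (norm_nonneg _).trans (hf₀ y (hyS (mem_closedBall_self hh.le)))
  refine ContinuousLinearMap.opNorm_le_of_unit_norm (by positivity) fun v hv => ?_
  have hhv : ‖h • v‖ = h := by rw [norm_smul, hv, mul_one, Real.norm_of_nonneg hh.le]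
  have hp : y + h • v ∈ closedBall y h := by simp [hhv]
  have hq : y - h • v ∈ closedBall y h := by simp [hhv]
  have hosc : ∀ z ∈ closedBall y h,
      ‖fderivWithin ℝ f S z - fderivWithin ℝ f S x‖ ≤ M₂ * (2 * h) := fun z hz => by
    refine (hf₂ z (hyS hz)).trans ?_
    gcongr
    linarith [dist_triangle z y x, mem_closedBall.1 hz, dist_eq_norm z x]
  have hmv := (convex_closedBall y h).norm_image_sub_le_of_norm_hasFDerivWithin_le'
    (fun z hz => (hf z (hyS hz)).hasFDerivWithinAt.mono hyS) hosc hq hp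
  have hsub : y + h • v - (y - h • v) = (2 * h) • v := by module
  rw [hsub, map_smul, norm_smul, hv, mul_one, Real.norm_of_nonneg (by positivity)] at hmv
  have hdiff : ‖f (y + h • v) - f (y - h • v)‖ ≤ M₀ + M₀ :=
    (norm_sub_le _ _).trans (add_le_add (hf₀ _ (hyS hp)) (hf₀ _ (hyS hq)))
  have htri := norm_le_insert (f (y + h • v) - f (y - h • v)) ((2 * h) • fderivWithin ℝ f S x v)
  rw [norm_smul, Real.norm_of_nonneg (by positivity)] at htri
  rw [← mul_le_mul_iff_right₀ (by positivity : 0 < 2 * h)]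
  calc 2 * h * ‖fderivWithin ℝ f S x v‖ ≤ M₀ + M₀ + M₂ * (2 * h) * (2 * h) := by linarith
    _ = 2 * h * (M₀ / h + 2 * h * M₂) := by field_simp; ring

theorem norm_iteratedFDerivWithin_succ_le_of_norm_le {k : ℕ} (hS : Convex ℝ S)
    (hu : UniqueDiffOn ℝ S) (hx : x ∈ S) (hh : 0 < h) (hyS : closedBall y h ⊆ S)
    (hyx : dist y x ≤ h) (hf : ContDiffOn ℝ (k + 2 : ℕ) f S)
    (hf₀ : ∀ z ∈ S, ‖iteratedFDerivWithin ℝ k f S z‖ ≤ M₀)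
    (hf₂ : ∀ z ∈ S, ‖iteratedFDerivWithin ℝ (k + 2) f S z‖ ≤ M₂) :
    ‖iteratedFDerivWithin ℝ (k + 1) f S x‖ ≤ M₀ / h + 2 * h * M₂ := by
  have hdiff : ∀ j < k + 2, DifferentiableOn ℝ (iteratedFDerivWithin ℝ j f S) S := fun j hj =>
    hf.differentiableOn_iteratedFDerivWithin (by exact_mod_cast hj) hu
  rw [← norm_fderivWithin_iteratedFDerivWithin]
  refine norm_fderivWithin_le_of_norm_le hh hyS hyx (hdiff k (by omega))
    ((norm_nonneg _).trans (hf₂ x hx)) hf₀ fun z hz => ?_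
  have hlip := hS.norm_image_sub_le_of_norm_fderivWithin_le (hdiff (k + 1) (by omega))
    (fun w hw => norm_fderivWithin_iteratedFDerivWithin.trans_le (hf₂ w hw)) hx hz
  rw [iteratedFDerivWithin_succ_eq_comp_left, Function.comp_apply, Function.comp_apply,
    ← dist_eq_norm] at hlip
  rw [← dist_eq_norm]
  exact (LinearIsometryEquiv.dist_map _ _ _).symm.trans_le hlip

theorem exists_closedBall_subset_closedBall {r : ℝ} (hr : 0 < r) (hh : 0 ≤ h) (hhr : h ≤ r)
    (hx : x ∈ closedBall (0 : E) r) : ∃ y, dist y x ≤ h ∧ closedBall y h ⊆ closedBall 0 r := by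
  have hxr : ‖x‖ ≤ r := mem_closedBall_zero_iff.1 hx
  have hq : h / r ≤ 1 := (div_le_one hr).2 hhr
  have hqx : h / r * ‖x‖ ≤ h :=
    (mul_le_mul_of_nonneg_left hxr (by positivity)).trans_eq (by field_simp)
  refine ⟨(1 - h / r) • x, ?_, closedBall_subset_closedBall' ?_⟩
  · rw [dist_eq_norm, show (1 - h / r) • x - x = -((h / r) • x) by module, norm_neg, norm_smul,
      Real.norm_of_nonneg (by positivity)]
    exact hqx
  · rw [dist_zero_right, norm_smul, Real.norm_of_nonneg (by linarith)]
    have : (1 - h / r) * ‖x‖ ≤ (1 - h / r) * r := mul_le_mul_of_nonneg_left hxr (by linarith)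
    have : (1 - h / r) * r = r - h := by field_simp
    linarith

theorem uniqueDiffOn_closedBall {x : E} {r : ℝ} (hr : 0 < r) : UniqueDiffOn ℝ (closedBall x r) :=
  uniqueDiffOn_convex (convex_closedBall x r)
    ⟨x, ball_subset_interior_closedBall (mem_ball_self hr)⟩

/-- The constant in the interpolation inequality `cnNormOn_closedBall_sq_le`. -/
noncomputable def interpolationConst (r : ℝ) : ℝ := 1 / min 1 r + 2 * min 1 r

theorem one_le_interpolationConst {r : ℝ} (hr : 0 < r) : 1 ≤ interpolationConst r := by
  have hmin : 0 < min 1 r := lt_min one_pos hr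
  have hinv : 1 ≤ 1 / min 1 r := (one_le_div hmin).2 (min_le_left _ _)
  exact hinv.trans (le_add_of_nonneg_right (by positivity))

theorem continuousOn_interpolationConst : ContinuousOn interpolationConst (Ioi 0) :=
  (continuousOn_const.div (by fun_prop) fun _ hr => (lt_min one_pos hr).ne').add (by fun_prop)

variable [FiniteDimensional ℝ E]

/-- The Landau–Kolmogorov inequality on a ball. -/
theorem cnNormOn_closedBall_sq_le {r : ℝ} (hr : 0 < r) {k : ℕ}
    (hf : ContDiffOn ℝ (k + 2 : ℕ) f (closedBall 0 r)) (hpos : 0 < cnNormOn (closedBall 0 r) k f) :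
    cnNormOn (closedBall 0 r) (k + 1) f ^ 2 ≤ interpolationConst r ^ 2 *
      (cnNormOn (closedBall 0 r) k f * cnNormOn (closedBall 0 r) (k + 2) f) := by
  have hcpt := ProperSpace.isCompact_closedBall (0 : E) r
  have hu := uniqueDiffOn_closedBall (x := (0 : E)) hr
  have hfk : ContDiffOn ℝ k f (closedBall 0 r) := hf.of_le (by exact_mod_cast Nat.le_add_right k 2)
  set a := cnNormOn (closedBall 0 r) k f
  set b := cnNormOn (closedBall 0 r) (k + 2) f
  have hab : a ≤ b := cnNormOn_mono hcpt hu (by omega) hf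
  have hb : 0 < b := hpos.trans_le hab
  have hκ := one_le_interpolationConst hr
  have hmin : 0 < min 1 r := lt_min one_pos hr
  suffices cnNormOn (closedBall 0 r) (k + 1) f ≤ interpolationConst r * (√a * √b) by
    calc _ ≤ (interpolationConst r * (√a * √b)) ^ 2 := pow_le_pow_left₀ cnNormOn_nonneg this 2
      _ = _ := by rw [mul_pow, mul_pow, Real.sq_sqrt hpos.le, Real.sq_sqrt hb.le]
  refine cnNormOn_le (by positivity) fun i hi x hx => ?_
  rcases hi.lt_or_eq with hik | rfl
  · calc ‖iteratedFDerivWithin ℝ i f (closedBall 0 r) x‖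
        ≤ a := norm_iteratedFDerivWithin_le_cnNormOn hcpt hu hfk (Nat.le_of_lt_succ hik) hx
      _ = √a * √a := (Real.mul_self_sqrt hpos.le).symm
      _ ≤ √a * √b := by gcongr
      _ ≤ interpolationConst r * (√a * √b) := le_mul_of_one_le_left (by positivity) hκ
  · have hh : 0 < min 1 r * (√a / √b) := by positivity
    have hhr : min 1 r * (√a / √b) ≤ r :=
      (mul_le_of_le_one_right hmin.le (div_le_one_of_le₀ (by gcongr) (by positivity))).trans
        (min_le_right _ _)
    obtain ⟨y, hyx, hy⟩ := exists_closedBall_subset_closedBall hr hh.le hhr hx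
    calc ‖iteratedFDerivWithin ℝ (k + 1) f (closedBall 0 r) x‖
        ≤ a / (min 1 r * (√a / √b)) + 2 * (min 1 r * (√a / √b)) * b :=
          norm_iteratedFDerivWithin_succ_le_of_norm_le (convex_closedBall 0 r) hu hx hh hy hyx hf
            (fun z hz => norm_iteratedFDerivWithin_le_cnNormOn hcpt hu hfk le_rfl hz)
            (fun z hz => norm_iteratedFDerivWithin_le_cnNormOn hcpt hu hf le_rfl hz)
      _ = √a ^ 2 / (min 1 r * (√a / √b)) + 2 * (min 1 r * (√a / √b)) * √b ^ 2 := by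
          rw [Real.sq_sqrt hpos.le, Real.sq_sqrt hb.le]
      _ = interpolationConst r * (√a * √b) := by
          rw [interpolationConst]
          field_simp

theorem exists_cnNormOn_closedBall_le_geometric {r : ℝ} (hr : 0 < r)
    (hf : ContDiffOn ℝ ∞ f (closedBall 0 r)) (N : ℕ) :
    ∃ A : ℝ, 1 ≤ A ∧
      cnNormOn (closedBall 0 r) 1 f * A ^ N = cnNormOn (closedBall 0 r) (N + 1) f ∧
      ∀ j ≤ N, cnNormOn (closedBall 0 r) (j + 1) f ≤
        interpolationConst r ^ N ^ 2 * cnNormOn (closedBall 0 r) 1 f * A ^ j := by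
  have hfn : ∀ n : ℕ, ContDiffOn ℝ n f (closedBall 0 r) := fun n =>
    hf.of_le (by exact_mod_cast le_top)
  have hmono : Monotone fun k => cnNormOn (closedBall 0 r) (k + 1) f := fun i j hij =>
    cnNormOn_mono (ProperSpace.isCompact_closedBall 0 r) (uniqueDiffOn_closedBall hr) (by omega)
      (hfn _)
  rcases (cnNormOn_nonneg (S := closedBall (0 : E) r) (n := 1) (f := f)).eq_or_lt with hzero | hpos
  · have hfzero : EqOn f 0 (closedBall 0 r) := fun x hx => by
      have hfx := norm_iteratedFDerivWithin_le_cnNormOn (ProperSpace.isCompact_closedBall 0 r)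
        (uniqueDiffOn_closedBall hr) (hfn 1) zero_le_one hx
      rwa [← hzero, norm_iteratedFDerivWithin_zero, norm_le_zero_iff] at hfx
    exact ⟨1, le_rfl, by simp [cnNormOn_eq_zero hfzero], by simp [cnNormOn_eq_zero hfzero]⟩
  · have hpos' : ∀ k, 0 < cnNormOn (closedBall 0 r) (k + 1) f := fun k =>
      hpos.trans_le (hmono k.zero_le)
    exact exists_le_geometric_of_sq_le hpos' hmono (one_le_interpolationConst hr)
      (fun k => cnNormOn_closedBall_sq_le hr (hfn _) (hpos' k)) N

end Interpolation

section Extension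

variable {E F : Type*} [NormedAddCommGroup E] [NormedSpace ℝ E] [NormedAddCommGroup F]
  [NormedSpace ℝ F] {f : E → F} {ρ r : ℝ}

theorem exists_contDiff_eventuallyEq_of_mem_closedBall [HasContDiffBump E] {n : ℕ∞} {c : E}
    (hρ : 0 ≤ ρ) (hρr : ρ < r) (hf : ContDiffOn ℝ n f (ball c r)) :
    ∃ g : E → F, ContDiff ℝ n g ∧ ∀ y ∈ closedBall c ρ, g =ᶠ[nhds y] f := by
  obtain ⟨b, hρb, hbr⟩ := exists_between hρr
  obtain ⟨a, hρa, hab⟩ := exists_between hρb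
  let χ : ContDiffBump c := ⟨a, b, hρ.trans_lt hρa, hab⟩
  refine ⟨fun y => χ y • f y, contDiff_iff_contDiffAt.2 fun y => ?_, fun y hy => ?_⟩
  · by_cases hy : y ∈ tsupport χ
    · rw [χ.tsupport_eq] at hy
      exact χ.contDiffAt.smul
        (hf.contDiffAt (isOpen_ball.mem_nhds (closedBall_subset_ball hbr hy)))
    · refine contDiffAt_const (c := 0) |>.congr_of_eventuallyEq ?_
      filter_upwards [notMem_tsupport_iff_eventuallyEq.1 hy] with z hz
      rw [hz, Pi.zero_apply, zero_smul]
  · filter_upwards [χ.eventuallyEq_one_of_mem_ball (closedBall_subset_ball hρa hy)] with z hz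
    rw [hz, Pi.one_apply, one_smul]

theorem exists_contDiff_norm_iteratedFDeriv_le_cnNormOn [FiniteDimensional ℝ E] (hρ : 0 ≤ ρ)
    (hρr : ρ < r) (hf : ContDiffOn ℝ ∞ f (closedBall 0 r)) :
    ∃ g : C(E, F), ContDiff ℝ ∞ g ∧ EqOn g f (closedBall 0 ρ) ∧
      ∀ n : ℕ, ∀ i ≤ n, ∀ y ∈ closedBall 0 ρ,
        ‖iteratedFDeriv ℝ i g y‖ ≤ cnNormOn (closedBall 0 r) n f := by
  obtain ⟨g, hg, hgf⟩ :=
    exists_contDiff_eventuallyEq_of_mem_closedBall hρ hρr (hf.mono ball_subset_closedBall)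
  refine ⟨⟨g, hg.continuous⟩, hg, fun y hy => (hgf y hy).eq_of_nhds, fun n i hi y hy => ?_⟩
  have hyr : closedBall 0 r =ᶠ[nhds y] univ :=
    Filter.eventuallyEq_univ.2 (closedBall_mem_nhds_of_mem (closedBall_subset_ball hρr hy))
  have hderiv : iteratedFDeriv ℝ i g y = iteratedFDerivWithin ℝ i f (closedBall 0 r) y := by
    rw [((hgf y hy).iteratedFDeriv ℝ i).eq_of_nhds, ← iteratedFDerivWithin_univ,
      iteratedFDerivWithin_congr_set hyr]
  rw [ContinuousMap.coe_mk, hderiv]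
  exact norm_iteratedFDerivWithin_le_cnNormOn (ProperSpace.isCompact_closedBall 0 r)
    (uniqueDiffOn_closedBall (hρ.trans_lt hρr)) (hf.of_le (by exact_mod_cast le_top)) hi
    (closedBall_subset_closedBall hρr.le hy)

end Extension

section Flow

theorem apply_mem_closedBall_zero {X E : Type*} [TopologicalSpace X] [CompactSpace X]
    [NormedAddCommGroup E] {γ : C(X, E)} {ρ : ℝ} (hγ : γ ∈ closedBall 0 ρ) (t : X) :
    γ t ∈ closedBall 0 ρ := by
  rw [mem_closedBall_zero_iff] at hγ ⊢
  exact (γ.norm_coe_le_norm t).trans hγ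

variable {E : Type u} [NormedAddCommGroup E] [NormedSpace ℝ E] {Z : C(E, E)} {ρ : ℝ}

theorem norm_picardOperator_le {γ : C(unitInterval, E)} {C : ℝ} (h : ∀ t, ‖Z (γ t)‖ ≤ C) :
    ‖picardOperator Z γ‖ ≤ C := by
  rw [← norm_iteratedFDeriv_zero (𝕜 := ℝ) (f := picardOperator Z)]
  refine norm_iteratedFDeriv_picardOperator_le (contDiff_zero.2 Z.continuous) fun t => ?_
  rw [norm_iteratedFDeriv_zero]
  exact h t

theorem norm_fderiv_picardOperator_le (hZ : ContDiff ℝ 1 Z) {γ : C(unitInterval, E)} {C : ℝ}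
    (h : ∀ t, ‖fderiv ℝ Z (γ t)‖ ≤ C) : ‖fderiv ℝ (picardOperator Z) γ‖ ≤ C := by
  simp only [← norm_iteratedFDeriv_one] at h ⊢
  exact norm_iteratedFDeriv_picardOperator_le hZ h

theorem lipschitzOnWith_picardOperator {K : ℝ≥0} (hZ : ContDiff ℝ 1 Z)
    (h : ∀ y ∈ closedBall 0 ρ, ‖fderiv ℝ Z y‖ ≤ K) :
    LipschitzOnWith K (picardOperator Z) (closedBall 0 ρ) :=
  (convex_closedBall 0 ρ).lipschitzOnWith_of_nnnorm_fderiv_le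
    (fun γ _ => (contDiff_picardOperator (n := 1) hZ).differentiable one_ne_zero γ)
    fun _ hγ => norm_fderiv_picardOperator_le hZ fun t => h _ (apply_mem_closedBall_zero hγ t)

theorem lipschitzOnWith_const_add_smul_picardOperator {K : ℝ≥0} (hZ : ContDiff ℝ 1 Z)
    (h : ∀ y ∈ closedBall 0 ρ, ‖fderiv ℝ Z y‖ ≤ K) {t : ℝ} (ht : t ∈ Icc (0 : ℝ) 1) (x : E) :
    LipschitzOnWith K (fun γ => .const _ x + t • picardOperator Z γ) (closedBall 0 ρ) := by
  refine LipschitzOnWith.of_dist_le_mul fun γ hγ η hη => ?_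
  rw [dist_add_left, dist_eq_norm, ← smul_sub, norm_smul, Real.norm_of_nonneg ht.1, ← dist_eq_norm]
  exact (mul_le_of_le_one_left dist_nonneg ht.2).trans
    ((lipschitzOnWith_picardOperator hZ h).dist_le_mul γ hγ η hη)

theorem exists_contDiffOn_eq_const_add_smul_picardOperator [CompleteSpace E] {n : ℕ∞} (hn : 1 ≤ n)
    (hZ : ContDiff ℝ n Z) {s M : ℝ} {K : ℝ≥0} (hK : K < 1) (hρ : 0 < ρ) (hsM : s + M < ρ)
    (hZ₀ : ∀ y ∈ closedBall 0 ρ, ‖Z y‖ ≤ M) (hZ₁ : ∀ y ∈ closedBall 0 ρ, ‖fderiv ℝ Z y‖ ≤ K) :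
    ∃ Γ : ℝ × E → C(unitInterval, E), ContDiffOn ℝ n Γ (Icc 0 1 ×ˢ closedBall 0 s) ∧
      ∀ p ∈ Icc (0 : ℝ) 1 ×ˢ closedBall 0 s,
        Γ p ∈ ball 0 ρ ∧ Γ p = .const _ p.2 + p.1 • picardOperator Z (Γ p) := by
  let F (p : ℝ × E) (γ : C(unitInterval, E)) : C(unitInterval, E) :=
    .const _ p.2 + p.1 • picardOperator Z γ
  have hmaps : ∀ p ∈ Icc (0 : ℝ) 1 ×ˢ closedBall 0 s,
      MapsTo (F p) (closedBall 0 ρ) (interior (closedBall 0 ρ)) := by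
    rintro ⟨t, x⟩ ⟨ht, hx⟩ γ hγ
    rw [interior_closedBall _ hρ.ne', mem_ball_zero_iff]
    have hx' : ‖ContinuousMap.const unitInterval x‖ ≤ s :=
      (ContinuousMap.norm_le_of_nonempty _).2 fun _ => mem_closedBall_zero_iff.1 hx
    have hγ' : ‖t • picardOperator Z γ‖ ≤ M := by
      rw [norm_smul, Real.norm_of_nonneg ht.1]
      exact (mul_le_of_le_one_left (norm_nonneg _) ht.2).trans
        (norm_picardOperator_le fun u => hZ₀ _ (apply_mem_closedBall_zero hγ u))
    exact (norm_add_le_of_le hx' hγ').trans_lt hsM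
  have hsmooth : ContDiff ℝ n F.uncurry :=
    ((ContinuousLinearMap.const ℝ unitInterval).contDiff.comp contDiff_fst.snd).add
      (contDiff_fst.fst.smul ((contDiff_picardOperator hZ).comp contDiff_snd))
  have hn' : (n : WithTop ℕ∞) ≠ 0 := by exact_mod_cast (one_pos.trans_le hn).ne'
  obtain ⟨Γ, hΓ, hΓfix⟩ := exists_contDiffOn_isFixedPt hn' hK isClosed_closedBall
    (nonempty_closedBall.2 hρ.le) hmaps
    (fun p hp => lipschitzOnWith_const_add_smul_picardOperator
      (hZ.of_le (by exact_mod_cast hn)) hZ₁ hp.1 p.2)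
    fun _ _ _ _ => hsmooth.contDiffAt
  rw [interior_closedBall _ hρ.ne'] at hΓfix
  exact ⟨Γ, hΓ, fun p hp => ⟨(hΓfix p hp).1, (hΓfix p hp).2.symm⟩⟩

theorem eq_of_eq_const_add_smul_picardOperator {K : ℝ≥0} (hK : K < 1) (hZ : ContDiff ℝ 1 Z)
    (hZ₁ : ∀ y ∈ closedBall 0 ρ, ‖fderiv ℝ Z y‖ ≤ K) {t : ℝ} (ht : t ∈ Icc (0 : ℝ) 1) {x : E}
    {γ η : C(unitInterval, E)} (hγ : γ ∈ closedBall 0 ρ) (hη : η ∈ closedBall 0 ρ)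
    (hγfix : γ = .const _ x + t • picardOperator Z γ)
    (hηfix : η = .const _ x + t • picardOperator Z η) : γ = η :=
  eq_of_isFixedPt_of_lipschitzOnWith hK
    (lipschitzOnWith_const_add_smul_picardOperator hZ hZ₁ ht x) hγ hη hγfix.symm hηfix.symm

theorem comp_mulLeft_eq_const_add_smul_picardOperator {γ : C(unitInterval, E)} {x : E}
    (hγ : γ = .const _ x + picardOperator Z γ) (τ : unitInterval) :
    γ.comp (.mulLeft τ) = .const _ x + (τ : ℝ) • picardOperator Z (γ.comp (.mulLeft τ)) := by
  ext t
  have hγt := congrArg (fun γ => γ (τ * t)) hγ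
  rwa [ContinuousMap.add_apply, picardOperator_comp_mul] at hγt

/-- The flow `φ t x` is defined as the value at time `1` of the integral curve of `t • Z`; by
uniqueness, this curve is the integral curve `G x` of `Z` run up to time `t`. -/
theorem exists_contDiffOn_flow [CompleteSpace E] {n : ℕ∞} (hn : 1 ≤ n) (hZ : ContDiff ℝ n Z)
    {s M : ℝ} {K : ℝ≥0} (hK : K < 1) (hρ : 0 < ρ) (hsM : s + M < ρ)
    (hZ₀ : ∀ y ∈ closedBall 0 ρ, ‖Z y‖ ≤ M) (hZ₁ : ∀ y ∈ closedBall 0 ρ, ‖fderiv ℝ Z y‖ ≤ K) :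
    ∃ (φ : ℝ → E → E) (G : E → C(unitInterval, E)),
      ContDiffOn ℝ n φ.uncurry (Icc 0 1 ×ˢ closedBall 0 s) ∧ ContDiffOn ℝ n G (closedBall 0 s) ∧
      (∀ x ∈ closedBall 0 s, G x ∈ ball 0 ρ) ∧
      (∀ x ∈ closedBall 0 s, G x = .const _ x + picardOperator Z (G x)) ∧
      ∀ x ∈ closedBall 0 s, ∀ t : unitInterval, φ t x = G x t := by
  obtain ⟨Γ, hΓ, hΓfix⟩ :=
    exists_contDiffOn_eq_const_add_smul_picardOperator hn hZ hK hρ hsM hZ₀ hZ₁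
  have hmem : MapsTo (fun x : E => ((1 : ℝ), x)) (closedBall 0 s) (Icc 0 1 ×ˢ closedBall 0 s) :=
    fun x hx => ⟨right_mem_Icc.2 zero_le_one, hx⟩
  have hfix : ∀ x ∈ closedBall 0 s, Γ (1, x) = .const _ x + picardOperator Z (Γ (1, x)) :=
    fun x hx => by simpa only [one_smul] using (hΓfix _ (hmem hx)).2
  refine ⟨fun t x => Γ (t, x) 1, fun x => Γ (1, x),
    (ContinuousMap.evalCLM ℝ (1 : unitInterval) :
      C(unitInterval, E) →L[ℝ] E).contDiff.comp_contDiffOn hΓ,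
    hΓ.comp (by fun_prop) hmem, fun x hx => (hΓfix _ (hmem hx)).1, hfix, fun x hx t => ?_⟩
  have hcomp : (Γ (1, x)).comp (.mulLeft t) ∈ closedBall 0 ρ := by
    refine mem_closedBall_zero_iff.2 ((ContinuousMap.norm_le _ hρ.le).2 fun u => ?_)
    exact ((Γ (1, x)).norm_coe_le_norm _).trans (mem_ball_zero_iff.1 (hΓfix _ (hmem hx)).1).le
  have hrescale := eq_of_eq_const_add_smul_picardOperator hK (hZ.of_le (by exact_mod_cast hn)) hZ₁
    t.2 (ball_subset_closedBall (hΓfix (t, x) ⟨t.2, hx⟩).1) hcomp (hΓfix (t, x) ⟨t.2, hx⟩).2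
    (comp_mulLeft_eq_const_add_smul_picardOperator (hfix x hx) t)
  simpa using congrArg (fun γ => γ 1) hrescale

/-- The constant `C(n, r)` bounding the `C^n` size of the time-one displacement by that of the
vector field: `1` for order `0`, and for order `j + 1` the constant of the fixed point estimate. -/
noncomputable def flowConst (n : ℕ) (r : ℝ) : ℝ :=
  1 + ∑ j ∈ Finset.range n, fixedPointConst (interpolationConst r ^ j ^ 2) j

theorem continuousOn_flowConst (n : ℕ) : ContinuousOn (flowConst n) (Ioi 0) :=
  continuousOn_const.add <| continuousOn_finsetSum _ fun j _ =>
    (continuous_fixedPointConst j).comp_continuousOn (continuousOn_interpolationConst.pow _)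

theorem fixedPointConst_interpolationConst_nonneg {r : ℝ} (hr : 0 < r) (j : ℕ) :
    0 ≤ fixedPointConst (interpolationConst r ^ j ^ 2) j :=
  fixedPointConst_nonneg (pow_nonneg (zero_le_one.trans (one_le_interpolationConst hr)) _) j

theorem one_le_flowConst {r : ℝ} (hr : 0 < r) (n : ℕ) : 1 ≤ flowConst n r :=
  le_add_of_nonneg_right <|
    Finset.sum_nonneg fun j _ => fixedPointConst_interpolationConst_nonneg hr j

theorem fixedPointConst_le_flowConst {r : ℝ} (hr : 0 < r) {j n : ℕ} (hj : j < n) :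
    fixedPointConst (interpolationConst r ^ j ^ 2) j ≤ flowConst n r :=
  (Finset.single_le_sum (fun j _ => fixedPointConst_interpolationConst_nonneg hr j)
    (Finset.mem_range.2 hj)).trans (le_add_of_nonneg_left zero_le_one)

variable {G : E → C(unitInterval, E)} {S : Set E} {x : E}

theorem norm_iteratedFDerivWithin_apply_one_sub_id_le {n : ℕ} (hZ : ContDiff ℝ n Z)
    (hG : ContDiffOn ℝ n G S) (hS : UniqueDiffOn ℝ S)
    (hfix : ∀ x ∈ S, G x = .const _ x + picardOperator Z (G x)) (hx : x ∈ S) :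
    ‖iteratedFDerivWithin ℝ n (fun x => G x 1 - x) S x‖ ≤
      ‖iteratedFDerivWithin ℝ n (picardOperator Z ∘ G) S x‖ := by
  let ev : C(unitInterval, E) →L[ℝ] E := ContinuousMap.evalCLM ℝ 1
  have hev : ‖ev‖ ≤ 1 := ev.opNorm_le_bound zero_le_one fun γ => by
    rw [one_mul]
    exact γ.norm_coe_le_norm 1
  have hdispl : EqOn (fun x => G x 1 - x) (ev ∘ picardOperator Z ∘ G) S := fun x hx =>
    sub_eq_of_eq_add' (congrArg (fun γ => γ 1) (hfix x hx))
  have hcomp : ContDiffOn ℝ n (picardOperator Z ∘ G) S :=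
    (contDiff_picardOperator (n := n) hZ).comp_contDiffOn hG
  rw [iteratedFDerivWithin_congr hdispl hx]
  exact (ev.norm_iteratedFDerivWithin_comp_left (hcomp x hx) hS hx le_rfl).trans
    (mul_le_of_le_one_left (norm_nonneg _) hev)

theorem norm_iteratedFDerivWithin_picardOperator_comp_le {n : ℕ} (hZ : ContDiff ℝ (n + 1 : ℕ) Z)
    (hG : ContDiffOn ℝ (n + 1 : ℕ) G S) (hS : UniqueDiffOn ℝ S)
    (hfix : ∀ x ∈ S, G x = .const _ x + picardOperator Z (G x)) (hx : x ∈ S) {K M A : ℝ}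
    (hK : 0 ≤ K) (hM : M ≤ 1 / 2) (hA : 1 ≤ A) (hZ₁ : ∀ t, ‖fderiv ℝ Z (G x t)‖ ≤ M)
    (hZn : ∀ j ≤ n, ∀ t, ‖iteratedFDeriv ℝ (j + 1) Z (G x t)‖ ≤ K * M * A ^ j) :
    ‖iteratedFDerivWithin ℝ (n + 1) (picardOperator Z ∘ G) S x‖ ≤
      fixedPointConst K n * M * A ^ n := by
  have hconst : ‖(ContinuousLinearMap.const ℝ unitInterval : E →L[ℝ] C(unitInterval, E))‖ ≤ 1 :=
    ContinuousLinearMap.opNorm_le_bound _ zero_le_one fun y => by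
      rw [one_mul]
      exact (ContinuousMap.norm_le_of_nonempty _).2 fun _ => le_rfl
  refine (norm_iteratedFDerivWithin_comp_le_of_eq_add
    (contDiff_picardOperator (n := (n + 1 : ℕ)) hZ) hG hS hx hconst hfix hK hM hA
    (norm_fderiv_picardOperator_le (hZ.of_le (by simp)) hZ₁) fun j hj => ?_).1
  exact norm_iteratedFDeriv_picardOperator_le
    (hZ.of_le (by exact_mod_cast Nat.succ_le_succ hj)) (hZn j hj)

theorem cnNormOn_apply_one_sub_id_le [FiniteDimensional ℝ E] {r : ℝ} (hr : 0 < r) {Y : E → E}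
    (hY : ContDiffOn ℝ ∞ Y (closedBall 0 r)) (hY₁ : cnNormOn (closedBall 0 r) 1 Y ≤ 1 / 2)
    (hZ : ContDiff ℝ ∞ Z) (hG : ContDiffOn ℝ ∞ G S) (hS : UniqueDiffOn ℝ S)
    (hfix : ∀ x ∈ S, G x = .const _ x + picardOperator Z (G x))
    (hZY : ∀ n : ℕ, ∀ i ≤ n, ∀ x ∈ S, ∀ t,
      ‖iteratedFDeriv ℝ i Z (G x t)‖ ≤ cnNormOn (closedBall 0 r) n Y) (n : ℕ) :
    cnNormOn S n (fun x => G x 1 - x) ≤ flowConst n r * cnNormOn (closedBall 0 r) n Y := by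
  have hflow := one_le_flowConst hr n
  have hY₀ := cnNormOn_nonneg (S := closedBall 0 r) (n := n) (f := Y)
  have hle : ∀ i : ℕ, (i : ℕ∞ω) ≤ ∞ := fun i => by exact_mod_cast le_top
  refine cnNormOn_le (by positivity) fun i hi x hx => ?_
  refine (norm_iteratedFDerivWithin_apply_one_sub_id_le (hZ.of_le (hle i)) (hG.of_le (hle i)) hS
    hfix hx).trans ?_
  obtain _ | j := i
  · rw [norm_iteratedFDerivWithin_zero]
    refine (norm_picardOperator_le fun t => ?_).trans (le_mul_of_one_le_left hY₀ hflow)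
    simpa only [norm_iteratedFDeriv_zero] using hZY n 0 hi x hx t
  · obtain ⟨A, hA, hAj, hgeom⟩ := exists_cnNormOn_closedBall_le_geometric hr hY j
    calc ‖iteratedFDerivWithin ℝ (j + 1) (picardOperator Z ∘ G) S x‖
        ≤ fixedPointConst (interpolationConst r ^ j ^ 2) j * cnNormOn (closedBall 0 r) 1 Y *
            A ^ j :=
          norm_iteratedFDerivWithin_picardOperator_comp_le (hZ.of_le (hle _)) (hG.of_le (hle _)) hS
            hfix hx (pow_nonneg (zero_le_one.trans (one_le_interpolationConst hr)) _) hY₁ hA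
            (fun t => (norm_iteratedFDeriv_one Z).symm.trans_le (hZY 1 1 le_rfl x hx t))
            fun i hi t => (hZY (i + 1) (i + 1) le_rfl x hx t).trans (hgeom i hi)
      _ = fixedPointConst (interpolationConst r ^ j ^ 2) j *
            cnNormOn (closedBall 0 r) (j + 1) Y := by rw [mul_assoc, hAj]
      _ ≤ flowConst n r * cnNormOn (closedBall 0 r) n Y := by
          gcongr
          · exact cnNormOn_nonneg
          · exact fixedPointConst_le_flowConst hr hi
          · exact cnNormOn_mono (ProperSpace.isCompact_closedBall 0 r) (uniqueDiffOn_closedBall hr)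
              hi (hY.of_le (hle n))

end Flow

theorem flow_existence_and_estimate_general {E : Type u} [NormedAddCommGroup E] [NormedSpace ℝ E]
    [FiniteDimensional ℝ E] {r s : ℝ} (hs : 0 < s) (hsr : s < r) {Y : E → E}
    (hY : ContDiffOn ℝ ∞ Y (closedBall 0 r)) (hY₀ : cnNormOn (closedBall 0 r) 0 Y < r - s)
    (hY₁ : cnNormOn (closedBall 0 r) 1 Y ≤ 1 / 2) :
    ∃ φ : ℝ → E → E,
      ContDiffOn ℝ ∞ (fun p : ℝ × E => φ p.1 p.2) (Icc 0 1 ×ˢ closedBall 0 s) ∧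
      (∀ x ∈ closedBall (0 : E) s, φ 0 x = x) ∧
      (∀ t ∈ Icc (0 : ℝ) 1, ∀ x ∈ closedBall (0 : E) s, φ t x ∈ ball (0 : E) r ∧
        HasDerivWithinAt (fun τ => φ τ x) (Y (φ t x)) (Icc 0 1) t) ∧
      ∀ n : ℕ, cnNormOn (closedBall 0 s) n (fun x => φ 1 x - x) ≤
        flowConst n r * cnNormOn (closedBall 0 r) n Y := by
  have := FiniteDimensional.complete ℝ E
  obtain ⟨ρ, hsρ, hρr⟩ : ∃ ρ, s + cnNormOn (closedBall 0 r) 0 Y < ρ ∧ ρ < r :=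
    exists_between (by linarith)
  have hρ : 0 < ρ := hs.trans ((le_add_of_nonneg_right cnNormOn_nonneg).trans_lt hsρ)
  obtain ⟨Z, hZ, hZY, hZn⟩ := exists_contDiff_norm_iteratedFDeriv_le_cnNormOn hρ.le hρr hY
  have hZ₀ : ∀ y ∈ closedBall 0 ρ, ‖Z y‖ ≤ cnNormOn (closedBall 0 r) 0 Y := fun y hy =>
    norm_iteratedFDeriv_zero.symm.trans_le (hZn 0 0 le_rfl y hy)
  have hZ₁ : ∀ y ∈ closedBall 0 ρ, ‖fderiv ℝ Z y‖ ≤ (1 / 2 : ℝ≥0) := fun y hy =>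
    (norm_iteratedFDeriv_one Z).symm.trans_le ((hZn 1 1 le_rfl y hy).trans (by simpa using hY₁))
  obtain ⟨φ, G, hφ, hG, hGball, hGfix, hφG⟩ :=
    exists_contDiffOn_flow (n := ⊤) le_top hZ (by norm_num) hρ hsρ hZ₀ hZ₁
  have hGρ : ∀ x ∈ closedBall 0 s, ∀ t, G x t ∈ closedBall 0 ρ := fun x hx =>
    apply_mem_closedBall_zero (ball_subset_closedBall (hGball x hx))
  have hφ₁ : EqOn (fun x => φ 1 x - x) (fun x => G x 1 - x) (closedBall 0 s) := fun x hx =>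
    congrArg (· - x) (hφG x hx 1)
  refine ⟨φ, hφ, fun x hx => ?_, fun t ht x hx => ?_, fun n => ?_⟩
  · exact (hφG x hx 0).trans (apply_zero_of_eq_const_add_picardOperator (hGfix x hx))
  · have hφρ : φ t x ∈ closedBall 0 ρ := hφG x hx ⟨t, ht⟩ ▸ hGρ x hx ⟨t, ht⟩
    refine ⟨closedBall_subset_ball hρr hφρ, ?_⟩
    rw [← hZY hφρ]
    exact hasDerivWithinAt_of_eq_const_add_picardOperator (hGfix x hx) (hφG x hx) ht
  · rw [cnNormOn_congr hφ₁]
    exact cnNormOn_apply_one_sub_id_le (hs.trans hsr) hY hY₁ hZ hG (uniqueDiffOn_closedBall hs)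
      hGfix (fun n i hi x hx t => hZn n i hi _ (hGρ x hx t)) n

/-- there is `θ > 0`, depending only on `m`, and constants
`C(n,r) > 0` depending continuously on `r`, such that for all `0 < s < r` and every
smooth flat vector field `Y` on `B̄_r` with `‖Y‖_{0,r} < (r−s)θ` and `‖Y‖_{1,r} < θ`,
the flow of `Y` exists for `t ∈ [0,1]` as a smooth map `φ : [0,1] × B̄_s → B_r` with
`φ(0,x) = x` and `∂ₜφ = Y ∘ φ`, and the time-one flow satisfies
`‖φ¹_Y − id‖_{n,s} ≤ C(n,r) ‖Y‖_{n,r}`. -/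
theorem flow_existence_and_estimate (m : ℕ) (hm : 1 ≤ m) :
    ∃ θ > (0 : ℝ), ∃ C : ℕ → ℝ → ℝ,
      (∀ n : ℕ, ContinuousOn (C n) (Set.Ioi 0) ∧ ∀ r : ℝ, 0 < r → 0 < C n r) ∧
      ∀ r s : ℝ, 0 < s → s < r →
        ∀ Y : EuclideanSpace ℝ (Fin m) → EuclideanSpace ℝ (Fin m),
          ContDiffOn ℝ (⊤ : ℕ∞) Y (closedBall 0 r) → FlatVF m r Y →
          cnNorm m r 0 Y < (r - s) * θ → cnNorm m r 1 Y < θ →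
          ∃ φ : ℝ → EuclideanSpace ℝ (Fin m) → EuclideanSpace ℝ (Fin m),
            ContDiffOn ℝ (⊤ : ℕ∞)
              (fun p : ℝ × EuclideanSpace ℝ (Fin m) => φ p.1 p.2)
              (Set.Icc 0 1 ×ˢ closedBall 0 s) ∧
            (∀ x ∈ closedBall (0 : EuclideanSpace ℝ (Fin m)) s, φ 0 x = x) ∧
            (∀ t ∈ Set.Icc (0 : ℝ) 1,
              ∀ x ∈ closedBall (0 : EuclideanSpace ℝ (Fin m)) s,
                φ t x ∈ ball (0 : EuclideanSpace ℝ (Fin m)) r ∧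
                HasDerivWithinAt (fun τ => φ τ x) (Y (φ t x)) (Set.Icc 0 1) t) ∧
            ∀ n : ℕ, cnNorm m s n (fun x => φ 1 x - x) ≤ C n r * cnNorm m r n Y :=
  ⟨1 / 2, one_half_pos, flowConst,
    fun n => ⟨continuousOn_flowConst n, fun _ hr => one_pos.trans_le (one_le_flowConst hr n)⟩,
    fun _ _ hs hsr _ hY _ hY₀ hY₁ => flow_existence_and_estimate_general hs hsr hY
      (hY₀.trans (mul_lt_of_lt_one_right (sub_pos.2 hsr) one_half_lt_one)) hY₁.le⟩
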